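/- arXiv:2208.05897 — 7 statements merged into one kernel-verified Lean document; each statement's English description precedes it below -/
import Mathlib

section
/- For every integer N ≥ 2, the threshold satisfies the bounds N/e ≤ n*_N ≤ (N-1)/e + 2, where e is Euler's number. -/
/-!
The sum `∑_{k=n}^{N-1} 1/k` is squeezed between two logarithms by telescoping
`log (k+1) - log k ≤ 1/k ≤ log k - log (k-1)`:
it is at least `log (N/n)` and, for `n ≥ 2`, at most `log ((N-1)/(n-1))`.
The threshold itself satisfies `∑ ≤ 1`, so `log (N/n*) ≤ 1`, i.e. `N ≤ e n*`.
If `n* ≥ 3`, its predecessor violates the inequality by minimality, so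
`1 < log ((N-1)/(n*-2))`, i.e. `e (n*-2) < N-1`; if `n* ≤ 2` the upper bound is trivial.
-/

open Finset Filter Topology

/-- Threshold `n*_N = min{ n ∈ {1,…,N} : ∑_{k=n}^{N-1} 1/k ≤ 1 }`
(the sum is empty, equal to 0, when `n = N`, so the minimum exists). -/
noncomputable def nstar (N : ℕ) : ℕ :=
  sInf {n : ℕ | 1 ≤ n ∧ n ≤ N ∧ ∑ k ∈ Finset.Ico n N, (1 : ℝ) / k ≤ 1}

lemma log_add_one_sub_log_le {x : ℝ} (hx : 0 < x) :
    Real.log (x + 1) - Real.log x ≤ 1 / x := by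
  rw [← Real.log_div (by positivity) hx.ne']
  refine (Real.log_le_sub_one_of_pos (by positivity)).trans (le_of_eq ?_)
  field_simp
  ring

lemma one_div_le_log_add_one_sub_log {x : ℝ} (hx : 0 < x) :
    1 / (x + 1) ≤ Real.log (x + 1) - Real.log x := by
  have h := Real.log_le_sub_one_of_pos (show 0 < x / (x + 1) by positivity)
  rw [Real.log_div hx.ne' (by positivity)] at h
  have h' : x / (x + 1) - 1 = -(1 / (x + 1)) := by
    field_simp
    ring
  linarith

lemma log_sub_log_le_sum {n N : ℕ} (hn : 1 ≤ n) (hN : n ≤ N) :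
    Real.log N - Real.log n ≤ ∑ k ∈ Finset.Ico n N, (1 : ℝ) / k := by
  induction N, hN using Nat.le_induction with
  | base => simp
  | succ N h ih =>
    rw [Finset.sum_Ico_succ_top h]
    have := log_add_one_sub_log_le (x := N) (by exact_mod_cast hn.trans h)
    push_cast
    linarith

/-- The indices are shifted by one to avoid subtraction: this is
`∑_{k=n}^{N-1} 1/k ≤ log (N-1) - log (n-1)` with `n`, `N` replaced by `n+1`, `N+1`. -/
lemma sum_le_log_sub_log {n N : ℕ} (hn : 1 ≤ n) (hN : n ≤ N) :
    ∑ k ∈ Finset.Ico (n + 1) (N + 1), (1 : ℝ) / k ≤ Real.log N - Real.log n := by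
  induction N, hN using Nat.le_induction with
  | base => simp
  | succ N h ih =>
    rw [Finset.sum_Ico_succ_top (by omega)]
    have := one_div_le_log_add_one_sub_log (x := N) (by exact_mod_cast hn.trans h)
    push_cast
    linarith

/-- For every integer `N ≥ 2`, the threshold satisfies `N/e ≤ n*_N ≤ (N-1)/e + 2`. -/
theorem nstar_bounds (N : ℕ) (hN : 2 ≤ N) :
    (N : ℝ) / Real.exp 1 ≤ (nstar N : ℝ) ∧
    (nstar N : ℝ) ≤ ((N : ℝ) - 1) / Real.exp 1 + 2 := by
  obtain ⟨h1, h2, h3⟩ : nstar N ∈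
      {n : ℕ | 1 ≤ n ∧ n ≤ N ∧ ∑ k ∈ Finset.Ico n N, (1 : ℝ) / k ≤ 1} :=
    Nat.sInf_mem ⟨N, by omega, le_rfl, by simp⟩
  have hmin : ∀ m < nstar N, ¬ (1 ≤ m ∧ m ≤ N ∧ ∑ k ∈ Finset.Ico m N, (1 : ℝ) / k ≤ 1) :=
    fun m hm => Nat.notMem_of_lt_sInf hm
  generalize nstar N = n at *
  have hN0 : (0 : ℝ) < N := by positivity
  have hn0 : (0 : ℝ) < n := by exact_mod_cast h1
  constructor
  · rw [div_le_iff₀ (Real.exp_pos 1)]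
    have h := (log_sub_log_le_sum h1 h2).trans h3
    rw [← Real.log_le_log_iff hN0 (by positivity), Real.log_mul hn0.ne' (Real.exp_pos 1).ne',
      Real.log_exp]
    linarith
  · rcases le_or_gt n 2 with hn | hn
    · have hn' : (n : ℝ) ≤ 2 := by exact_mod_cast hn
      have hN' : (2 : ℝ) ≤ N := by exact_mod_cast hN
      have : 0 ≤ ((N : ℝ) - 1) / Real.exp 1 := div_nonneg (by linarith) (Real.exp_pos 1).le
      linarith
    · obtain ⟨m, rfl⟩ : ∃ m, n = m + 2 := ⟨n - 2, by omega⟩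
      obtain ⟨M, rfl⟩ : ∃ M, N = M + 1 := ⟨N - 1, by omega⟩
      have hm0 : (0 : ℝ) < m := by
        have : 0 < m := by omega
        exact_mod_cast this
      have hM0 : (0 : ℝ) < M := by
        have : 0 < M := by omega
        exact_mod_cast this
      have hgt : 1 < ∑ k ∈ Finset.Ico (m + 1) (M + 1), (1 : ℝ) / k := by
        by_contra! hle
        exact hmin (m + 1) (by omega) ⟨by omega, by omega, hle⟩
      have h := hgt.trans_le (sum_le_log_sub_log (n := m) (N := M) (by omega) (by omega))
      push_cast
      rw [add_sub_cancel_right]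
      gcongr
      rw [le_div_iff₀ (Real.exp_pos 1), ← Real.log_le_log_iff (by positivity) hM0,
        Real.log_mul hm0.ne' (Real.exp_pos 1).ne', Real.log_exp]
      linarith
end

section
/- For every real number c with 0 ≤ c < 1, the sequence n^c · S_n(c) converges to 1/Γ(1-c) as n → ∞. -/
/-!
Euler's limit formula says that `Real.GammaSeq s n = n^s * n! / ∏ j ∈ range (n + 1), (s + j)` tends
to `Γ(s)`. At `s = 1 - c` the denominator is `(n + 1 - c) * n! * S_n(c)` (`prod_eq_factorial_mul_Sprod`),
so `n^c * S_n(c) = (n / (n + (1 - c))) / GammaSeq (1 - c) n`. The first factor tends to `1`, and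
`Γ(1 - c) ≠ 0` since `c < 1`.
-/

open Finset Filter Topology

/-- `S_n(c) = ∏_{k=1}^n (1 - c/k)`, with `S_0(c) = 1` (empty product). -/
noncomputable def Sprod (c : ℝ) (n : ℕ) : ℝ :=
  ∏ k ∈ Finset.Icc 1 n, (1 - c / (k : ℝ))

theorem prod_eq_factorial_mul_Sprod (c : ℝ) (n : ℕ) :
    ∏ j ∈ Finset.range n, (1 - c + (j : ℝ)) = (n.factorial : ℝ) * Sprod c n := by
  induction n with
  | zero => simp [Sprod]
  | succ n ih =>
    have h : (n : ℝ) + 1 ≠ 0 := by positivity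
    have hS : Sprod c (n + 1) = Sprod c n * (1 - c / ((n : ℝ) + 1)) := by
      simp [Sprod, Finset.prod_Icc_succ_top]
    rw [Finset.prod_range_succ, ih, hS, Nat.factorial_succ]
    push_cast
    field_simp
    ring

theorem Sprod_pos {c : ℝ} (hc1 : c < 1) (n : ℕ) : 0 < Sprod c n := by
  refine Finset.prod_pos fun k hk => ?_
  have hk1 : (1 : ℝ) ≤ k := by exact_mod_cast (Finset.mem_Icc.mp hk).1
  rw [sub_pos, div_lt_one (by linarith)]
  linarith

/-- For every real `c` with `0 ≤ c < 1`, `n^c · S_n(c) → 1/Γ(1-c)` as `n → ∞`. -/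
theorem Sprod_tendsto (c : ℝ) (hc0 : 0 ≤ c) (hc1 : c < 1) :
    Filter.Tendsto (fun n : ℕ => (n : ℝ) ^ c * Sprod c n) Filter.atTop
      (nhds (1 / Real.Gamma (1 - c))) := by
  have hΓ : Real.Gamma (1 - c) ≠ 0 := (Real.Gamma_pos_of_pos (by linarith)).ne'
  refine ((tendsto_natCast_div_add_atTop (1 - c)).div
    (Real.GammaSeq_tendsto_Gamma (1 - c)) hΓ).congr' ?_
  filter_upwards [eventually_ge_atTop 1] with n hn
  have hn0 : (0 : ℝ) < n := by exact_mod_cast hn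
  have hS := (Sprod_pos hc1 n).ne'
  have hf : (n.factorial : ℝ) ≠ 0 := by positivity
  have hd : (n : ℝ) + (1 - c) ≠ 0 := by linarith
  have hd' : 1 - c + (n : ℝ) ≠ 0 := by linarith
  have hp : (n : ℝ) ^ c ≠ 0 := (Real.rpow_pos_of_pos hn0 c).ne'
  simp only [Pi.div_apply, Real.GammaSeq]
  rw [Finset.prod_range_succ, prod_eq_factorial_mul_Sprod, Real.rpow_sub hn0, Real.rpow_one,
    add_comm (1 - c) (n : ℝ)]
  field_simp
end

section
/- For every real number c with 0 ≤ c < 1, the rescaled success probability N^c · π*_N converges to e^{c-1} / Γ(2-c) as N → ∞, where e is Euler's number and Γ is the real Gamma function. In particular, if c = 0 then π*_N converges to 1/e. -/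
/-!
Write `a n = V_{n,N}(0)`, `b n = V_{n,N}(1)`, `S n = ∑_{k=n}^{N-1} 1/k`, and let `m = n*_N - 1` be
the last index with `S m > 1`. The recursion has two regimes.

* For `n > m` stopping is optimal, `b n = n/N`, and the recursion telescopes to
  `a n = (n/N) S n`; this formula persists at `n = m` (`secV_late`).
* For `n ≤ m` one has `a n ≥ n/N`, so the maximum is `c n/N + (1-c) a n`, and
  `u n = a n + c n / ((1-c) N)` satisfies the homogeneous recursion
  `u n = ((n+1-c)/(n+1)) u (n+1)` (`secV_early`). Moreover `b 1 = (1-c) u 1`.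

Hence `π*_N = u m * ∏_{k=1}^{m} (k-c)/k` exactly (`secV_one`). Since `S (m+1) ≤ 1 < S m`, comparison of
harmonic numbers with the logarithm gives `m → ∞`, `S m → 1` and `m/N → 1/e`, so
`u m → e⁻¹/(1-c)`. Euler's limit formula for `Γ` gives `m^c ∏_{k=1}^{m} (k-c)/k → 1/Γ(1-c)`
(`tendsto_rpow_mul_prod`), and `(1-c) Γ(1-c) = Γ(2-c)`.
-/

open Finset Filter Topology

/-- Value functions: `(secV c N n).1` is `V_{n,N}(0)` and `(secV c N n).2` is `V_{n,N}(1)`,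
defined by backward recursion: `V_{N,N}(0) = 0`, `V_{N,N}(1) = 1`; for `1 ≤ n ≤ N-1`,
`V_{n,N}(0) = (1/(n+1))·V_{n+1,N}(1) + (n/(n+1))·V_{n+1,N}(0)` and
`V_{n,N}(1) = max{ c·(n/N) + (1-c)·V_{n,N}(0), n/N }`; and
`V_{0,N}(0) = max{ c/N + (1-c)·V_{1,N}(0), 1/N }` (the value `V_{0,N}(1)` is unused, set to 0). -/
noncomputable def secV (c : ℝ) (N : ℕ) (n : ℕ) : ℝ × ℝ :=
  if _h : N ≤ n then (0, 1)
  else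
    let next := secV c N (n + 1)
    if n = 0 then
      (max (c / N + (1 - c) * next.1) (1 / N), 0)
    else
      let v0 := (1 / ((n : ℝ) + 1)) * next.2 + ((n : ℝ) / ((n : ℝ) + 1)) * next.1
      (v0, max (c * ((n : ℝ) / N) + (1 - c) * v0) ((n : ℝ) / N))
termination_by N - n
decreasing_by omega

/-! ### Harmonic tails -/

/-- The harmonic tail `∑_{k=n}^{N-1} 1/k` that defines the threshold. -/
noncomputable def harmTail (N n : ℕ) : ℝ := ∑ k ∈ Finset.Ico n N, (1 : ℝ) / k

lemma harmTail_step {N n : ℕ} (h : n < N) : harmTail N n = 1 / n + harmTail N (n + 1) := by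
  unfold harmTail
  rw [Finset.sum_eq_sum_Ico_succ_bot h]

lemma harmTail_anti (N : ℕ) {n k : ℕ} (h : n ≤ k) : harmTail N k ≤ harmTail N n := by
  unfold harmTail
  apply Finset.sum_le_sum_of_subset_of_nonneg (Finset.Ico_subset_Ico_left h)
  intros
  positivity

lemma harmTail_succ_eq {N n : ℕ} (h : n + 1 ≤ N) :
    harmTail N (n + 1) = ((harmonic N : ℚ) : ℝ) - ((harmonic n : ℚ) : ℝ) - 1 / N := by
  induction N, h using Nat.le_induction with
  | base => simp [harmTail, harmonic_succ]
  | succ N hN ih =>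
    have : harmTail (N + 1) (n + 1) = harmTail N (n + 1) + 1 / N := by
      unfold harmTail
      rw [Finset.sum_Ico_succ_top hN]
    rw [this, ih, harmonic_succ]
    push_cast
    ring

/-! ### Solving the recursion -/

lemma secV_ge (c : ℝ) {N n : ℕ} (h : N ≤ n) : secV c N n = (0, 1) := by
  rw [secV]; simp [h]

lemma secV_fst (c : ℝ) {N n : ℕ} (h1 : 1 ≤ n) (h : n < N) :
    (secV c N n).1 = (1 / ((n : ℝ) + 1)) * (secV c N (n + 1)).2
      + ((n : ℝ) / ((n : ℝ) + 1)) * (secV c N (n + 1)).1 := by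
  rw [secV]; simp [not_le.2 h, Nat.ne_of_gt h1]

lemma secV_snd (c : ℝ) {N n : ℕ} (h1 : 1 ≤ n) (h : n < N) :
    (secV c N n).2 = max (c * ((n : ℝ) / N) + (1 - c) * (secV c N n).1) ((n : ℝ) / N) := by
  rw [secV]; simp [not_le.2 h, Nat.ne_of_gt h1]

lemma secV_snd_of_le {c : ℝ} (hc1 : c < 1) {N n : ℕ} (h1 : 1 ≤ n) (h : n ≤ N)
    (ha : (secV c N n).1 ≤ (n : ℝ) / N) : (secV c N n).2 = (n : ℝ) / N := by
  rcases h.lt_or_eq with h | rfl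
  · rw [secV_snd c h1 h, max_eq_right]
    nlinarith
  · have : (n : ℝ) ≠ 0 := by positivity
    simp [secV_ge, this]

/-- In the stopping regime the recursion telescopes; the formula at `n` only uses the optimality of
stopping at later indices, so it reaches one step below the threshold. -/
lemma secV_late {c : ℝ} (hc1 : c < 1) {N m : ℕ} (h1 : 1 ≤ m) (hS : harmTail N (m + 1) ≤ 1)
    {n : ℕ} (hmn : m ≤ n) (hn : n ≤ N) :
    (secV c N n).1 = (n : ℝ) / N * harmTail N n := by
  induction hn using Nat.decreasingInduction with
  | self => simp [secV_ge, harmTail]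
  | of_succ n hn ih =>
    have ih := ih (by omega)
    have hS' : harmTail N (n + 1) ≤ 1 := (harmTail_anti N (by omega)).trans hS
    have hb : (secV c N (n + 1)).2 = ((n + 1 : ℕ) : ℝ) / N := by
      apply secV_snd_of_le hc1 (by omega) hn
      rw [ih]
      exact mul_le_of_le_one_right (by positivity) hS'
    have hn0 : (n : ℝ) ≠ 0 := by
      have : n ≠ 0 := by omega
      exact_mod_cast this
    have hN0 : (N : ℝ) ≠ 0 := by
      have : N ≠ 0 := by omega
      exact_mod_cast this
    rw [secV_fst c (by omega) hn, hb, ih, harmTail_step hn]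
    push_cast
    field_simp

lemma secV_snd_of_ge {c : ℝ} (hc1 : c < 1) {N n : ℕ} (h1 : 1 ≤ n) (h : n < N)
    (ha : (n : ℝ) / N ≤ (secV c N n).1) :
    (secV c N n).2 = c * ((n : ℝ) / N) + (1 - c) * (secV c N n).1 := by
  rw [secV_snd c h1 h, max_eq_left]
  nlinarith

/-- In the learning regime, `V_{n,N}(0)` shifted by the particular solution `-c n / ((1-c) N)`
solves a homogeneous first-order recursion. -/
lemma secV_early {c : ℝ} (hc1 : c < 1) {N m : ℕ} (hmN : m < N)
    (ha : (m : ℝ) / N ≤ (secV c N m).1) {n : ℕ} (h1 : 1 ≤ n) (hn : n ≤ m) :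
    (n : ℝ) / N ≤ (secV c N n).1 ∧
    (secV c N n).1 + c * n / ((1 - c) * N) =
      ((secV c N m).1 + c * m / ((1 - c) * N)) *
        ∏ k ∈ Finset.Ico n m, ((k : ℝ) + 1 - c) / (k + 1) := by
  induction hn using Nat.decreasingInduction with
  | self => exact ⟨ha, by simp⟩
  | of_succ n hn ih =>
    obtain ⟨ih1, ih2⟩ := ih (by omega)
    have hN0 : (0 : ℝ) < N := by
      have : 0 < N := by omega
      exact_mod_cast this
    have hn0 : (0 : ℝ) < n := by exact_mod_cast h1
    have hb := secV_snd_of_ge hc1 (n := n + 1) (N := N) (by omega) (by omega) ih1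
    have hb' : ((n + 1 : ℕ) : ℝ) / N ≤ (secV c N (n + 1)).2 := by
      rw [secV_snd c (by omega) (by omega)]
      exact le_max_right _ _
    have hf := secV_fst c h1 (hn.trans hmN)
    refine ⟨?_, ?_⟩
    · rw [hf]
      calc (n : ℝ) / N ≤ (1 / ((n : ℝ) + 1)) * (((n + 1 : ℕ) : ℝ) / N)
            + ((n : ℝ) / ((n : ℝ) + 1)) * (((n + 1 : ℕ) : ℝ) / N) := by
            have : (1 / ((n : ℝ) + 1)) * (((n + 1 : ℕ) : ℝ) / N)
              + ((n : ℝ) / ((n : ℝ) + 1)) * (((n + 1 : ℕ) : ℝ) / N) = (n : ℝ) / N + 1 / N := by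
              push_cast
              field_simp
              ring
            rw [this]
            have : (0 : ℝ) ≤ 1 / N := by positivity
            linarith
        _ ≤ _ := by gcongr
    · have hc : (1 - c) ≠ 0 := by linarith
      rw [Finset.prod_eq_prod_Ico_succ_bot hn, mul_left_comm, ← ih2, hf, hb]
      push_cast
      field_simp
      ring

/-- Exact formula for the success probability in terms of the last learning index `m`. -/
lemma secV_one {c : ℝ} (hc1 : c < 1) {N m : ℕ} (h1 : 1 ≤ m) (hmN : m < N)
    (hS : harmTail N (m + 1) ≤ 1) (hS' : 1 ≤ harmTail N m) :
    (secV c N 1).2 = ((m : ℝ) / N * (harmTail N m + c / (1 - c))) *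
      ∏ k ∈ Finset.range m, ((k : ℝ) + 1 - c) / (k + 1) := by
  have hm := secV_late hc1 h1 hS le_rfl hmN.le
  have ha : (m : ℝ) / N ≤ (secV c N m).1 := by
    rw [hm]
    exact le_mul_of_one_le_right (by positivity) hS'
  obtain ⟨e1, e2⟩ := secV_early hc1 hmN ha le_rfl h1
  have hN0 : (N : ℝ) ≠ 0 := by
    have : N ≠ 0 := by omega
    exact_mod_cast this
  have hc : (1 - c) ≠ 0 := by linarith
  rw [secV_snd_of_ge hc1 le_rfl (by omega) e1]
  have e3 : c * (((1 : ℕ) : ℝ) / N) + (1 - c) * (secV c N 1).1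
      = (1 - c) * ((secV c N 1).1 + c * (1 : ℕ) / ((1 - c) * N)) := by
    field_simp
    ring
  rw [e3, e2, hm, Finset.range_eq_Ico, Finset.prod_eq_prod_Ico_succ_bot h1]
  push_cast
  field_simp
  ring

/-! ### Asymptotics -/

/-- Euler's limit formula for `Γ(1-c)`, rearranged. -/
lemma tendsto_rpow_mul_prod {c : ℝ} (hc1 : c < 1) :
    Tendsto (fun m : ℕ => (m : ℝ) ^ c * ∏ k ∈ Finset.range m, ((k : ℝ) + 1 - c) / (k + 1))
      atTop (𝓝 (1 / Real.Gamma (1 - c))) := by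
  have hG : Real.Gamma (1 - c) ≠ 0 := (Real.Gamma_pos_of_pos (by linarith)).ne'
  have h1 := Real.GammaSeq_tendsto_Gamma (1 - c)
  have h2 : Tendsto (fun m : ℕ => (m : ℝ) / (m + (1 - c))) atTop (𝓝 1) :=
    tendsto_natCast_div_add_atTop (1 - c)
  refine (h2.div h1 hG).congr' ?_
  filter_upwards [eventually_ge_atTop 1] with m hm
  have hm0 : (0 : ℝ) < m := by exact_mod_cast hm
  have hp : 0 < ∏ k ∈ Finset.range m, ((k : ℝ) + 1 - c) := by
    apply Finset.prod_pos
    intro k _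
    have : (0 : ℝ) ≤ k := by positivity
    linarith
  have hfac : ∏ k ∈ Finset.range m, ((k : ℝ) + 1) = (m.factorial : ℝ) := by
    rw [← Finset.prod_range_add_one_eq_factorial]
    push_cast
    rfl
  have hprod : ∏ j ∈ Finset.range (m + 1), ((1 - c) + (j : ℝ)) =
      (∏ k ∈ Finset.range m, ((k : ℝ) + 1 - c)) * (m + (1 - c)) := by
    rw [Finset.prod_range_succ]
    congr 1
    · exact Finset.prod_congr rfl fun k _ => by ring
    · ring
  have hx : (m : ℝ) + (1 - c) ≠ 0 := by linarith
  have hf0 : (m.factorial : ℝ) ≠ 0 := by positivity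
  have hmc : (m : ℝ) ^ c ≠ 0 := by positivity
  simp only [Pi.div_apply]
  rw [Real.GammaSeq, hprod, Finset.prod_div_distrib, hfac, Real.rpow_sub hm0, Real.rpow_one]
  field_simp

/-- The index preceding the threshold; for `N ≥ 3` it is the last positive `n` with
`∑_{k=n}^{N-1} 1/k > 1`. -/
noncomputable def lastLearn (N : ℕ) : ℕ := nstar N - 1

lemma lastLearn_spec {N : ℕ} (hN : 3 ≤ N) :
    1 ≤ lastLearn N ∧ lastLearn N < N ∧ harmTail N (lastLearn N + 1) ≤ 1 ∧
      1 < harmTail N (lastLearn N) := by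
  set A := {n : ℕ | 1 ≤ n ∧ n ≤ N ∧ ∑ k ∈ Finset.Ico n N, (1 : ℝ) / k ≤ 1} with hA
  have hne : A.Nonempty := ⟨N, by omega, le_rfl, by simp⟩
  obtain ⟨h1, h2, h3⟩ : nstar N ∈ A := Nat.sInf_mem hne
  have hmin : ∀ n, 1 ≤ n → n ≤ N → harmTail N n ≤ 1 → nstar N ≤ n :=
    fun n a b d => Nat.sInf_le (s := A) ⟨a, b, d⟩
  -- `1 + 1/2 > 1` already exceeds the threshold, so `n*_N ≥ 2`.
  have hone : 1 < harmTail N 1 := by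
    rw [harmTail_step (by omega), harmTail_step (by omega)]
    have : 0 ≤ harmTail N (1 + 1 + 1) := Finset.sum_nonneg fun _ _ => by positivity
    norm_num at this ⊢
    linarith
  have h4 : nstar N ≠ 1 := by
    intro h
    rw [h] at h3
    exact absurd h3 (not_le.2 hone)
  have h5 : lastLearn N + 1 = nstar N := by unfold lastLearn; omega
  refine ⟨by omega, by omega, by rw [h5]; exact h3, ?_⟩
  by_contra! h
  have := hmin (lastLearn N) (by omega) (by omega) h
  omega

lemma tendsto_lastLearn : Tendsto lastLearn atTop atTop := by
  rw [tendsto_atTop]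
  intro M
  -- The tail from the fixed index `M + 1` diverges, so eventually the threshold lies beyond it.
  have hdiv : Tendsto (fun N : ℕ => harmTail N (M + 1)) atTop atTop := by
    have hlog : Tendsto (fun N : ℕ => Real.log N) atTop atTop :=
      Real.tendsto_log_atTop.comp tendsto_natCast_atTop_atTop
    have h := (Real.tendsto_harmonic_sub_log.sub
      (tendsto_one_div_atTop_nhds_zero_nat (𝕜 := ℝ))).add_atTop
        (tendsto_atTop_add_const_right atTop (-((harmonic M : ℚ) : ℝ)) hlog)
    refine h.congr' ?_
    filter_upwards [eventually_ge_atTop (M + 1)] with N hN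
    rw [harmTail_succ_eq hN]
    ring
  filter_upwards [hdiv.eventually_gt_atTop 1, eventually_ge_atTop 3] with N hN h3
  obtain ⟨h1, h2, h4, -⟩ := lastLearn_spec h3
  by_contra! h
  exact absurd ((harmTail_anti N (by omega : lastLearn N + 1 ≤ M + 1)).trans h4) (not_le.2 hN)

lemma tendsto_harmTail_lastLearn :
    Tendsto (fun N => harmTail N (lastLearn N)) atTop (𝓝 1) := by
  have hinv : Tendsto (fun N => 1 + 1 / (lastLearn N : ℝ)) atTop (𝓝 (1 + 0)) :=
    (tendsto_one_div_atTop_nhds_zero_nat.comp tendsto_lastLearn).const_add 1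
  rw [add_zero] at hinv
  refine tendsto_of_tendsto_of_tendsto_of_le_of_le' tendsto_const_nhds hinv ?_ ?_
  · filter_upwards [eventually_ge_atTop 3] with N hN
    exact (lastLearn_spec hN).2.2.2.le
  · filter_upwards [eventually_ge_atTop 3] with N hN
    obtain ⟨-, h2, h3, -⟩ := lastLearn_spec hN
    rw [harmTail_step h2]
    linarith

/-- The threshold fraction tends to `1/e`: the tail sum `1` equals, up to a vanishing error,
`log N - log m`, because `H_n - log n` converges. -/
lemma tendsto_lastLearn_div :
    Tendsto (fun N : ℕ => (lastLearn N : ℝ) / N) atTop (𝓝 (Real.exp (-1))) := by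
  have h1 := Real.tendsto_harmonic_sub_log
  have h2 := h1.comp tendsto_lastLearn
  have hinv := tendsto_one_div_atTop_nhds_zero_nat (𝕜 := ℝ)
  have hinv' := hinv.comp tendsto_lastLearn
  have h3 := (((h1.sub h2).sub hinv).add hinv').sub tendsto_harmTail_lastLearn
  have h4 := (Real.continuous_exp.tendsto _).comp h3
  norm_num at h4
  refine h4.congr' ?_
  filter_upwards [eventually_ge_atTop 3] with N hN
  obtain ⟨h5, h6, -⟩ := lastLearn_spec hN
  have hm : (0 : ℝ) < lastLearn N := by exact_mod_cast h5
  have hN0 : (0 : ℝ) < N := by exact_mod_cast (by omega : 0 < N)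
  have h7 := harmTail_step h6
  rw [harmTail_succ_eq h6] at h7
  simp only [Function.comp_apply, h7]
  rw [← Real.exp_log (div_pos hm hN0), Real.log_div hm.ne' hN0.ne']
  congr 1
  ring

/-- For every real `c` with `0 ≤ c < 1`, the rescaled success probability
`N^c · π*_N` (where `π*_N = V_{1,N}(1)`) converges to `e^{c-1}/Γ(2-c)` as `N → ∞`.
In particular, if `c = 0` then `π*_N → 1/e`. -/
theorem success_prob_tendsto (c : ℝ) (hc0 : 0 ≤ c) (hc1 : c < 1) :
    Filter.Tendsto (fun N : ℕ => (N : ℝ) ^ c * (secV c N 1).2) Filter.atTop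
      (nhds (Real.exp (c - 1) / Real.Gamma (2 - c))) ∧
    (c = 0 →
      Filter.Tendsto (fun N : ℕ => (secV c N 1).2) Filter.atTop
        (nhds (1 / Real.exp 1))) := by
  have main : Tendsto (fun N : ℕ => (N : ℝ) ^ c * (secV c N 1).2) atTop
      (𝓝 (Real.exp (c - 1) / Real.Gamma (2 - c))) := by
    have hc : (1 - c) ≠ 0 := by linarith
    have hG : Real.Gamma (1 - c) ≠ 0 := (Real.Gamma_pos_of_pos (by linarith)).ne'
    have t1 := tendsto_lastLearn_div.rpow_const (p := -c) (Or.inl (Real.exp_ne_zero _))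
    have t2 := tendsto_lastLearn_div.mul (tendsto_harmTail_lastLearn.add_const (c / (1 - c)))
    have t3 := (tendsto_rpow_mul_prod hc1).comp tendsto_lastLearn
    have hlim : Real.exp (-1) ^ (-c) * (Real.exp (-1) * (1 + c / (1 - c))) *
        (1 / Real.Gamma (1 - c)) = Real.exp (c - 1) / Real.Gamma (2 - c) := by
      have g : Real.Gamma (2 - c) = (1 - c) * Real.Gamma (1 - c) := by
        rw [← Real.Gamma_add_one hc]
        congr 1
        ring
      rw [g, ← Real.exp_mul, sub_eq_add_neg c 1, Real.exp_add]
      have : -1 * -c = c := by ring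
      rw [this]
      field_simp
      ring
    rw [← hlim]
    refine ((t1.mul t2).mul t3).congr' ?_
    filter_upwards [eventually_ge_atTop 3] with N hN
    obtain ⟨h1, h2, h3, h4⟩ := lastLearn_spec hN
    have hm : (0 : ℝ) < lastLearn N := by exact_mod_cast h1
    have hN0 : (0 : ℝ) < N := by exact_mod_cast (by omega : 0 < N)
    rw [secV_one hc1 h1 h2 h3 h4.le, Real.div_rpow hm.le hN0.le, Real.rpow_neg hm.le,
      Real.rpow_neg hN0.le]
    have a1 : (lastLearn N : ℝ) ^ c ≠ 0 := by positivity
    have a2 : (N : ℝ) ^ c ≠ 0 := by positivity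
    simp only [Function.comp_apply]
    field_simp
  refine ⟨main, ?_⟩
  rintro rfl
  simpa [Real.exp_neg] using main
end

section
/- The normalized value in state 0 is strictly decreasing and the normalized value in state 1 is (weakly) decreasing: for every integer n with 1 ≤ n ≤ N-1, V_{n+1}(0)/(n+1) < V_n(0)/n and V_{n+1}(1)/(n+1) ≤ V_n(1)/n. -/
/-!
Write `a n = V_n(0) / n` and `b n = V_n(1) / n`. Dividing the recursion by `n` gives
`a n = a (n + 1) + b (n + 1) / n` for `1 ≤ n < N`, and
`b n = max (c / N + (1 - c) * a n) (1 / N)` for `1 ≤ n ≤ N`; the latter also covers `n = N`, where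
`a N = 0` and the maximum is `1 / N` because `c ≤ 1`. Hence `b ≥ 1 / N > 0`, so `a` strictly
decreases, and `b` is a monotone function of `a`.
-/


open Finset Filter Topology

lemma secV_fst_div (N : ℕ) (c : ℝ) (n : ℕ) (hn1 : 1 ≤ n) (hn2 : n < N) :
    (secV c N n).1 / (n : ℝ) =
      (secV c N (n + 1)).1 / ((n : ℝ) + 1) + (secV c N (n + 1)).2 / ((n : ℝ) + 1) / n := by
  have hn : (0 : ℝ) < n := by exact_mod_cast hn1
  rw [secV, dif_neg (by omega)]
  simp only [if_neg (show n ≠ 0 by omega)]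
  field_simp
  ring

lemma secV_snd_div (N : ℕ) (c : ℝ) (hc1 : c < 1) (n : ℕ) (hn1 : 1 ≤ n) (hn2 : n ≤ N) :
    (secV c N n).2 / (n : ℝ) =
      max (c / N + (1 - c) * ((secV c N n).1 / n)) (1 / N) := by
  have hn : (0 : ℝ) < n := by exact_mod_cast hn1
  rcases hn2.eq_or_lt with rfl | hlt
  · have h : c / (n : ℝ) ≤ 1 / n := by gcongr
    rw [secV, dif_pos le_rfl]
    simpa using h
  · rw [secV, dif_neg (by omega)]
    simp only [if_neg (show n ≠ 0 by omega)]
    rw [← max_div_div_right hn.le]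
    congr 1 <;> field_simp

/-- The normalized value in state 0 is strictly decreasing and the normalized value in
state 1 is weakly decreasing: for `1 ≤ n ≤ N-1`,
`V_{n+1}(0)/(n+1) < V_n(0)/n` and `V_{n+1}(1)/(n+1) ≤ V_n(1)/n`. -/
theorem normalized_value_decreasing (N : ℕ) (hN : 2 ≤ N) (c : ℝ) (hc0 : 0 ≤ c) (hc1 : c < 1)
    (n : ℕ) (hn1 : 1 ≤ n) (hn2 : n ≤ N - 1) :
    (secV c N (n + 1)).1 / ((n : ℝ) + 1) < (secV c N n).1 / (n : ℝ) ∧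
    (secV c N (n + 1)).2 / ((n : ℝ) + 1) ≤ (secV c N n).2 / (n : ℝ) := by
  have hn : (0 : ℝ) < n := by exact_mod_cast hn1
  have hNpos : (0 : ℝ) < N := by exact_mod_cast (show 0 < N by omega)
  have ha := secV_fst_div N c n hn1 (by omega)
  have hb := secV_snd_div N c hc1 n hn1 (by omega)
  have hb' := secV_snd_div N c hc1 (n + 1) (by omega) (by omega)
  push_cast at hb'
  have hpos : 0 < (secV c N (n + 1)).2 / ((n : ℝ) + 1) := by
    rw [hb']
    exact lt_max_of_lt_right (by positivity)
  have hlt : (secV c N (n + 1)).1 / ((n : ℝ) + 1) < (secV c N n).1 / (n : ℝ) := by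
    rw [ha]
    exact lt_add_of_pos_right _ (div_pos hpos hn)
  refine ⟨hlt, ?_⟩
  rw [hb, hb']
  have hc : 0 ≤ 1 - c := by linarith
  exact max_le_max (by gcongr) le_rfl
end

section
/- For every integer n with max(1, n*_N - 1) ≤ n ≤ N, the value in state 0 has the closed form V_n(0) = (n/N) · ∑_{k=n}^{N-1} 1/k (the sum being empty, equal to 0, when n = N). -/
/-!
From the threshold on, the harmonic tail `∑_{k=m}^{N-1} 1/k` is at most `1`. Wherever the closed
form holds for the state-0 value at such an `m`, it gives `V_m(0) ≤ m/N`, so the maximum in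
`V_m(1)` is attained by stopping: `V_m(1) = m/N` (`secV_snd_of_fst`). Substituting this in the
recursion at `n = m - 1` gives
`V_n(0) = 1/N + (n/N) ∑_{k=n+1}^{N-1} 1/k = (n/N) ∑_{k=n}^{N-1} 1/k`,
and backward induction from `n = N` finishes. Computing `V_n(0)` only uses `V_{n+1}(1)`, which is
why the closed form reaches down to one index below the threshold.
-/

open Finset Filter Topology

/-- The harmonic tail is antitone in its starting index, so every index in `{1, …, N}` from the
threshold on satisfies the threshold inequality. -/
lemma tail_le_one_of_nstar_le {N m : ℕ} (hN : 1 ≤ N) (hm : nstar N ≤ m) :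
    ∑ k ∈ Finset.Ico m N, (1 : ℝ) / k ≤ 1 := by
  have hmem : nstar N ∈ {n : ℕ | 1 ≤ n ∧ n ≤ N ∧ ∑ k ∈ Finset.Ico n N, (1 : ℝ) / k ≤ 1} :=
    Nat.sInf_mem ⟨N, hN, le_rfl, by simp⟩
  refine le_trans ?_ hmem.2.2
  exact Finset.sum_le_sum_of_subset_of_nonneg (Finset.Ico_subset_Ico_left hm)
    fun _ _ _ => by positivity

/-- Where the closed form holds and the harmonic tail is at most `1`, stopping is optimal in
state 1. -/
lemma secV_snd_of_fst {N m : ℕ} {c : ℝ} (hc1 : c < 1) (hm1 : 1 ≤ m) (hmN : m ≤ N)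
    (hS : ∑ k ∈ Finset.Ico m N, (1 : ℝ) / k ≤ 1)
    (hV : (secV c N m).1 = ((m : ℝ) / N) * ∑ k ∈ Finset.Ico m N, (1 : ℝ) / k) :
    (secV c N m).2 = (m : ℝ) / N := by
  rcases hmN.eq_or_lt with rfl | hlt
  · have : (m : ℝ) ≠ 0 := by positivity
    rw [secV]
    simp [this]
  · have hsnd : (secV c N m).2 =
        max (c * ((m : ℝ) / N) + (1 - c) * (secV c N m).1) ((m : ℝ) / N) := by
      rw [secV]
      simp [show ¬ N ≤ m by omega, show m ≠ 0 by omega]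
    have hle : (secV c N m).1 ≤ (m : ℝ) / N := by
      rw [hV]
      exact mul_le_of_le_one_right (by positivity) hS
    rw [hsnd]
    apply max_eq_right
    nlinarith [mul_le_mul_of_nonneg_left hle (sub_nonneg.2 hc1.le)]

/-- For every integer `n` with `max(1, n*_N - 1) ≤ n ≤ N`, the value in state 0 has the
closed form `V_n(0) = (n/N) · ∑_{k=n}^{N-1} 1/k`. -/
theorem value_zero_closed_form (N : ℕ) (hN : 2 ≤ N) (c : ℝ) (hc0 : 0 ≤ c) (hc1 : c < 1)
    (n : ℕ) (hn1 : max 1 (nstar N - 1) ≤ n) (hn2 : n ≤ N) :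
    (secV c N n).1 = ((n : ℝ) / N) * ∑ k ∈ Finset.Ico n N, (1 : ℝ) / k := by
  obtain ⟨h1, h2⟩ := max_le_iff.1 hn1
  rcases hn2.eq_or_lt with rfl | hlt
  · rw [secV]
    simp
  · have ih := value_zero_closed_form N hN c hc0 hc1 (n + 1)
      (max_le (by omega) (by omega)) hlt
    have hsnd := secV_snd_of_fst hc1 (by omega) hlt
      (tail_le_one_of_nstar_le (by omega) (by omega)) ih
    have hfst : (secV c N n).1 = (1 / ((n : ℝ) + 1)) * (secV c N (n + 1)).2
        + ((n : ℝ) / ((n : ℝ) + 1)) * (secV c N (n + 1)).1 := by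
      rw [secV]
      simp [show ¬ N ≤ n by omega, show n ≠ 0 by omega]
    have hn0 : (n : ℝ) ≠ 0 := by positivity
    have hN0 : (N : ℝ) ≠ 0 := by positivity
    have hn10 : (n : ℝ) + 1 ≠ 0 := by positivity
    rw [hfst, hsnd, ih, Finset.sum_eq_sum_Ico_succ_bot hlt]
    push_cast
    field_simp
termination_by N - n
end

section
/- The value in state 1 equals n/N above the threshold and strictly exceeds n/N below it: for every integer n with n*_N ≤ n ≤ N one has V_n(1) = n/N, and for every integer n with 1 ≤ n < n*_N one has V_n(1) = c·(n/N) + (1-c)·V_n(0) > n/N. -/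
/-!
Write `S n = ∑_{k=n}^{N-1} 1/k`. Since `V_n(1)` is the maximum of `n/N` and a convex combination
of `n/N` and `V_n(0)` giving positive weight `1 - c` to `V_n(0)`, everything reduces to comparing
`V_n(0)` with `n/N`.

The sequence `(n/N) S n` satisfies the recursion of `V_n(0)` with `V_{n+1}(1)` replaced by
`(n+1)/N`. As `V_{n+1}(1) ≥ (n+1)/N` always, backward induction gives `V_n(0) ≥ (n/N) S n` for
every `n ≥ 1` (`le_secV_fst`); below the threshold `S n > 1`, so `V_n(0) > n/N`. At and above the
threshold `S n ≤ 1`, because `S` is antitone, and backward induction gives the equality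
`V_n(0) = (n/N) S n ≤ n/N` together with `V_n(1) = n/N` (`secV_eq_of_sum_le_one`).
-/

open Finset Filter Topology

lemma secV_self (c : ℝ) (N : ℕ) : secV c N N = (0, 1) := by
  rw [secV]; simp

lemma le_secV_snd (c : ℝ) {N n : ℕ} (h1 : 1 ≤ n) (h : n ≤ N) :
    (n : ℝ) / N ≤ (secV c N n).2 := by
  rcases h.eq_or_lt with rfl | h
  · rw [secV_self]; exact div_self_le_one _
  · rw [secV_snd c h1 h]; exact le_max_right _ _

/-- The sequence `(n/N) ∑_{k=n}^{N-1} 1/k` satisfies the recursion of `V_n(0)` in which the value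
in state 1 is replaced by `(n+1)/N`. -/
lemma harmonic_step {N n : ℕ} (h1 : 1 ≤ n) (h : n < N) :
    (n : ℝ) / N * ∑ k ∈ Finset.Ico n N, (1 : ℝ) / k =
      (1 / ((n : ℝ) + 1)) * (((n + 1 : ℕ) : ℝ) / N) + ((n : ℝ) / ((n : ℝ) + 1)) *
        (((n + 1 : ℕ) : ℝ) / N * ∑ k ∈ Finset.Ico (n + 1) N, (1 : ℝ) / k) := by
  rw [Finset.sum_eq_sum_Ico_succ_bot h]
  have hn : (n : ℝ) ≠ 0 := by positivity
  have hN : (N : ℝ) ≠ 0 := by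
    have : N ≠ 0 := by omega
    exact_mod_cast this
  have hn1 : (n : ℝ) + 1 ≠ 0 := by positivity
  push_cast
  field_simp

lemma le_secV_fst (c : ℝ) {N n : ℕ} (h1 : 1 ≤ n) (h : n ≤ N) :
    (n : ℝ) / N * ∑ k ∈ Finset.Ico n N, (1 : ℝ) / k ≤ (secV c N n).1 := by
  induction h using Nat.decreasingInduction with
  | self => simp [secV_self]
  | of_succ n h ih =>
    rw [secV_fst c h1 h, harmonic_step h1 h]
    have := ih (by omega)
    have := le_secV_snd c (N := N) (n := n + 1) (by omega) h
    gcongr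

lemma sum_Ico_antitone (N : ℕ) {m n : ℕ} (h : m ≤ n) :
    ∑ k ∈ Finset.Ico n N, (1 : ℝ) / k ≤ ∑ k ∈ Finset.Ico m N, (1 : ℝ) / k :=
  Finset.sum_le_sum_of_subset_of_nonneg (Finset.Ico_subset_Ico_left h)
    (fun _ _ _ => by positivity)

lemma secV_eq_of_sum_le_one {c : ℝ} (hc1 : c < 1) {N n : ℕ} (h1 : 1 ≤ n) (h : n ≤ N)
    (hs : ∑ k ∈ Finset.Ico n N, (1 : ℝ) / k ≤ 1) :
    (secV c N n).1 = (n : ℝ) / N * ∑ k ∈ Finset.Ico n N, (1 : ℝ) / k ∧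
      (secV c N n).2 = (n : ℝ) / N := by
  induction h using Nat.decreasingInduction with
  | self =>
    have hN : (N : ℝ) ≠ 0 := by positivity
    simp [secV_self, hN]
  | of_succ n h ih =>
    obtain ⟨e0, e1⟩ := ih (by omega) ((sum_Ico_antitone N (Nat.le_succ n)).trans hs)
    have e : (secV c N n).1 = (n : ℝ) / N * ∑ k ∈ Finset.Ico n N, (1 : ℝ) / k := by
      rw [secV_fst c h1 h, harmonic_step h1 h, e0, e1]
    refine ⟨e, ?_⟩
    have hle : (secV c N n).1 ≤ (n : ℝ) / N := by
      rw [e]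
      exact mul_le_of_le_one_right (by positivity) hs
    rw [secV_snd c h1 h]
    apply max_eq_right
    nlinarith

lemma nstar_mem {N : ℕ} (hN : 1 ≤ N) :
    1 ≤ nstar N ∧ nstar N ≤ N ∧ ∑ k ∈ Finset.Ico (nstar N) N, (1 : ℝ) / k ≤ 1 :=
  Nat.sInf_mem (s := {n : ℕ | 1 ≤ n ∧ n ≤ N ∧ ∑ k ∈ Finset.Ico n N, (1 : ℝ) / k ≤ 1})
    ⟨N, hN, le_rfl, by simp⟩

/-- The value in state 1 equals `n/N` above the threshold and strictly exceeds `n/N`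
below it: for `n*_N ≤ n ≤ N`, `V_n(1) = n/N`; for `1 ≤ n < n*_N`,
`V_n(1) = c·(n/N) + (1-c)·V_n(0) > n/N`. -/
theorem value_one_threshold (N : ℕ) (hN : 2 ≤ N) (c : ℝ) (hc0 : 0 ≤ c) (hc1 : c < 1) :
    (∀ n : ℕ, nstar N ≤ n → n ≤ N → (secV c N n).2 = (n : ℝ) / N) ∧
    (∀ n : ℕ, 1 ≤ n → n < nstar N →
      (secV c N n).2 = c * ((n : ℝ) / N) + (1 - c) * (secV c N n).1 ∧
      (n : ℝ) / N < (secV c N n).2) := by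
  obtain ⟨hs1, hsN, hs⟩ := nstar_mem (N := N) (by omega)
  refine ⟨fun n hn h => (secV_eq_of_sum_le_one hc1 (by omega) h
    ((sum_Ico_antitone N hn).trans hs)).2, fun n h1 hn => ?_⟩
  have hlt : n < N := by omega
  have hsum : 1 < ∑ k ∈ Finset.Ico n N, (1 : ℝ) / k := by
    by_contra! hcon
    exact Nat.notMem_of_lt_sInf hn ⟨h1, hlt.le, hcon⟩
  have hpos : 0 < (n : ℝ) / N := by
    have : 0 < N := by omega
    positivity
  have hV : (n : ℝ) / N < (secV c N n).1 :=
    (lt_mul_of_one_lt_right hpos hsum).trans_le (le_secV_fst c h1 hlt.le)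
  have hgt : (n : ℝ) / N < c * ((n : ℝ) / N) + (1 - c) * (secV c N n).1 := by
    nlinarith
  have e : (secV c N n).2 = c * ((n : ℝ) / N) + (1 - c) * (secV c N n).1 := by
    rw [secV_snd c h1 hlt]
    exact max_eq_left hgt.le
  exact ⟨e, e ▸ hgt⟩
end

section
/- The rescaled value N·V_{n,N}(x) is increasing in the total number of applicants N: for every integer n ≥ 0 and every integer N with max(n, 2) ≤ N, one has N·V_{n,N}(0) ≤ (N+1)·V_{n,N+1}(0), and for every integer n ≥ 1 with max(n, 2) ≤ N, one has N·V_{n,N}(1) ≤ (N+1)·V_{n,N+1}(1). -/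
/-!
After multiplication by `N`, the recursion for `a n = N * V_{n,N}(0)` and `b n = N * V_{n,N}(1)` no
longer involves `N`: for `1 ≤ n < N`, `a n = (b (n+1) + n * a (n+1)) / (n+1)` and
`b n = max (c * n + (1 - c) * a n) n`, while `a 0 = max (c + (1 - c) * a 1) 1`
(`mul_secV_fst`, `mul_secV_snd`, `mul_secV_zero`). Each step is monotone in the later values because
`c ≤ 1`. So it suffices to compare the two problems at `n = N`, where the smaller one has
`a N = 0` and `b N = N`, and the larger one has `a N ≥ 0` and `b N ≥ N`; backward induction
(`rescaled_mono_aux`) then carries the inequalities down to `n = 1`, and one last step reaches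
`n = 0`.
-/


open Finset Filter Topology

lemma mul_secV_fst (c : ℝ) {N n : ℕ} (hn : 1 ≤ n) (hN : n < N) :
    (N : ℝ) * (secV c N n).1 =
      (1 / ((n : ℝ) + 1)) * ((N : ℝ) * (secV c N (n + 1)).2) +
        ((n : ℝ) / ((n : ℝ) + 1)) * ((N : ℝ) * (secV c N (n + 1)).1) := by
  rw [secV, dif_neg (by omega)]
  simp only [if_neg (show n ≠ 0 by omega)]
  ring

lemma mul_secV_snd (c : ℝ) {N n : ℕ} (hn : 1 ≤ n) (hN : n < N) :
    (N : ℝ) * (secV c N n).2 =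
      max (c * n + (1 - c) * ((N : ℝ) * (secV c N n).1)) n := by
  have hN0 : (0 : ℝ) < N := by exact_mod_cast (by omega : 0 < N)
  have h : (secV c N n).2 = max (c * ((n : ℝ) / N) + (1 - c) * (secV c N n).1) ((n : ℝ) / N) := by
    rw [secV, dif_neg (by omega)]
    simp only [if_neg (show n ≠ 0 by omega)]
  rw [h, mul_max_of_nonneg _ _ hN0.le]
  congr 1 <;> field_simp

lemma mul_secV_zero (c : ℝ) {N : ℕ} (hN : 0 < N) :
    (N : ℝ) * (secV c N 0).1 = max (c + (1 - c) * ((N : ℝ) * (secV c N 1).1)) 1 := by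
  have hN0 : (0 : ℝ) < N := by exact_mod_cast hN
  have h : (secV c N 0).1 = max (c / N + (1 - c) * (secV c N 1).1) (1 / N) := by
    rw [secV, dif_neg (by omega)]
    simp
  rw [h, mul_max_of_nonneg _ _ hN0.le]
  congr 1 <;> field_simp

/-- Backward induction on `n = N - k`, run for both components at once since each step for
`V(0)` uses both values at `n + 1`. -/
lemma rescaled_mono_aux (c : ℝ) (hc1 : c < 1) (k : ℕ) : ∀ n N : ℕ, 1 ≤ n → n + k = N →
    (N : ℝ) * (secV c N n).1 ≤ ((N + 1 : ℕ) : ℝ) * (secV c (N + 1) n).1 ∧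
    (N : ℝ) * (secV c N n).2 ≤ ((N + 1 : ℕ) : ℝ) * (secV c (N + 1) n).2 := by
  induction k with
  | zero =>
    rintro n N hn rfl
    rw [Nat.add_zero, mul_secV_snd c hn (Nat.lt_succ_self n),
      mul_secV_fst c hn (Nat.lt_succ_self n), secV_self, secV_self]
    refine ⟨?_, ?_⟩
    · simp only [mul_zero, mul_one, add_zero]
      positivity
    · simp
  | succ k ih =>
    intro n N hn hk
    obtain ⟨h1, h2⟩ := ih (n + 1) N (by omega) (by omega)
    have hfst : (N : ℝ) * (secV c N n).1 ≤ ((N + 1 : ℕ) : ℝ) * (secV c (N + 1) n).1 := by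
      rw [mul_secV_fst c hn (show n < N by omega), mul_secV_fst c hn (show n < N + 1 by omega)]
      gcongr
    refine ⟨hfst, ?_⟩
    rw [mul_secV_snd c hn (show n < N by omega), mul_secV_snd c hn (show n < N + 1 by omega)]
    have : 0 ≤ 1 - c := by linarith
    gcongr

/-- The rescaled value `N·V_{n,N}(x)` is increasing in the total number of applicants `N`:
for every `n ≥ 0` and `N ≥ max(n, 2)`, `N·V_{n,N}(0) ≤ (N+1)·V_{n,N+1}(0)`, and for every
`n ≥ 1` with `N ≥ max(n, 2)`, `N·V_{n,N}(1) ≤ (N+1)·V_{n,N+1}(1)`. -/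
theorem rescaled_value_mono (c : ℝ) (hc0 : 0 ≤ c) (hc1 : c < 1) :
    (∀ n N : ℕ, 2 ≤ N → n ≤ N →
      (N : ℝ) * (secV c N n).1 ≤ ((N : ℝ) + 1) * (secV c (N + 1) n).1) ∧
    (∀ n N : ℕ, 1 ≤ n → 2 ≤ N → n ≤ N →
      (N : ℝ) * (secV c N n).2 ≤ ((N : ℝ) + 1) * (secV c (N + 1) n).2) := by
  have key : ∀ n N : ℕ, 1 ≤ n → n ≤ N → _ := fun n N hn hN =>
    rescaled_mono_aux c hc1 (N - n) n N hn (by omega)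
  refine ⟨fun n N hN hn => ?_, fun n N hn _ hnN => ?_⟩
  · rw [← Nat.cast_add_one]
    rcases Nat.eq_zero_or_pos n with rfl | hpos
    · rw [mul_secV_zero c (show 0 < N by omega), mul_secV_zero c N.succ_pos]
      have h1 := (key 1 N le_rfl (by omega)).1
      have : 0 ≤ 1 - c := by linarith
      gcongr
    · exact (key n N hpos hn).1
  · rw [← Nat.cast_add_one]
    exact (key n N hn hnN).2
end
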